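/- arXiv:1505.07665 — 3 statements merged into one kernel-verified Lean document; each statement's English description precedes it below -/
import Mathlib

section
/- For every integer k ≥ 1, every n ≥ 1 and every signature ε ∈ {+,−}ⁿ, each equivalence class of the Cambrian (k,ε)-twist congruence ≡ᵏ_ε on S_n is an interval of the weak order: it has a weak-order minimum μ and a weak-order maximum ω, and it consists precisely of all permutations σ with μ ≤ σ ≤ ω in the weak order. -/
/-!
The condition for exchanging the adjacent letters `a < c` only depends on which letters of the open
value interval `(a, c)` stand before the pair, and it is inherited by every larger pair `a₁ ≤ a`,
`c ≤ c₁` preceded by the same letters of `(a, c)`.  These two properties (`IsMono`) are all that is used.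

Orient every step downwards in the weak order (`DownStep`).  The key fact is `lift_step`: if
`x ≤ y` and `y` steps down to `y'`, then `x` reduces by down steps to some `x' ≤ y'`.  Indeed let
`y = U c a V` and `y' = U a c V`.  If `x` has `a` before `c`, then `x ≤ y'`.  Otherwise, no value of
`(a, c)` stands between `c` and `a` in `x`, because `x ≤ y` and `c`, `a` are adjacent in `y`; hence
somewhere between them there is a descent from a letter `≥ c` to a letter `≤ a`, and the letters of
`(a, c)` before this descent are those before `c` in `y`.  So this descent of `x` is a down step,
and well-founded induction on `x` finishes.

From lifting it follows that every class has a unique down-normal element, which is its minimum,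
and that every `σ` between this minimum and a member of the class is in the class
(`exists_minimum`).  Reversing words turns the weak order upside down and preserves the hypotheses
on the exchange condition, which gives the maximum.
-/

/-- The (right) weak order on permutations of `Fin n`: `τ ≤ σ` iff every coinversion of `τ`
(pair of values `i < j` whose positions in `τ` are inverted) is a coinversion of `σ`. -/
def weakLE {n : ℕ} (τ σ : Equiv.Perm (Fin n)) : Prop :=
  ∀ i j : Fin n, i < j → τ.symm j < τ.symm i → σ.symm j < σ.symm i
/-- One rewriting step of the Cambrian `(k,ε)`-twist congruence (signature `ε`, with `true`
standing for `+` and `false` for `-`): exchange two adjacent entries `a < c` of the one-line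
notation (positions `p` and `q = p+1`) whenever there exist values `a < a' < c' < c` such
that either the number of positive values in `[a',c']` before the pair exceeds the number of
negative values in `[a',c']` after the pair by at least `k`, or conversely. -/
def cambStep (k : ℕ) {n : ℕ} (ε : Fin n → Bool) (τ τ' : Equiv.Perm (Fin n)) : Prop :=
  ∃ p q : Fin n, (q : ℕ) = (p : ℕ) + 1 ∧ τ' = τ * Equiv.swap p q ∧
    ∃ a' c' : Fin n, min (τ p) (τ q) < a' ∧ a' < c' ∧ c' < max (τ p) (τ q) ∧
      ((Finset.univ.filter (fun v : Fin n =>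
          a' ≤ v ∧ v ≤ c' ∧ ε v = false ∧ q < τ.symm v)).card + k ≤
        (Finset.univ.filter (fun u : Fin n =>
          a' ≤ u ∧ u ≤ c' ∧ ε u = true ∧ τ.symm u < p)).card ∨
       (Finset.univ.filter (fun u : Fin n =>
          a' ≤ u ∧ u ≤ c' ∧ ε u = true ∧ τ.symm u < p)).card + k ≤
        (Finset.univ.filter (fun v : Fin n =>
          a' ≤ v ∧ v ≤ c' ∧ ε v = false ∧ q < τ.symm v)).card)

/-- The Cambrian `(k,ε)`-twist congruence `≡ᵏ_ε` on permutations of `Fin n`. -/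
def cambCong (k : ℕ) {n : ℕ} (ε : Fin n → Bool) :
    Equiv.Perm (Fin n) → Equiv.Perm (Fin n) → Prop :=
  Relation.EqvGen (cambStep k ε)

namespace CambrianTwist

variable {n : ℕ}

/-! ### Weak order -/

lemma weakLE_refl (x : Equiv.Perm (Fin n)) : weakLE x x := fun _ _ _ h => h

lemma weakLE_trans {x y z : Equiv.Perm (Fin n)} (h : weakLE x y) (h' : weakLE y z) :
    weakLE x z := fun i j hij hx => h' i j hij (h i j hij hx)

lemma weakLE_antisymm {x y : Equiv.Perm (Fin n)} (h : weakLE x y) (h' : weakLE y x) :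
    x = y := by
  -- Both words order the letters in the same way, so `y⁻¹ ∘ x` is an automorphism of `Fin n`.
  have key : ∀ i j, x.symm i < x.symm j → y.symm i < y.symm j := by
    intro i j hlt
    rcases lt_trichotomy i j with hij | hij | hij
    · by_contra hcon
      have hne : y.symm i ≠ y.symm j := fun e => hij.ne (y.symm.injective e)
      exact absurd (h' i j hij (lt_of_le_of_ne (not_lt.mp hcon) hne.symm)) (not_lt.mpr hlt.le)
    · subst hij
      exact absurd hlt (lt_irrefl _)
    · exact h j i hij hlt
  have hmono : StrictMono (fun p => y.symm (x p)) := by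
    intro p q hpq
    exact key _ _ (by simpa using hpq)
  let e : Fin n ≃o Fin n :=
    { toEquiv := x.trans y.symm
      map_rel_iff' := by
        intro p q
        exact hmono.le_iff_le }
  have he : e = OrderIso.refl _ := Subsingleton.elim _ _
  ext p
  have hp : y.symm (x p) = p := congrArg (fun f : Fin n ≃o Fin n => f p) he
  rw [Equiv.symm_apply_eq] at hp
  rw [hp]

/-- Exchanging an adjacent descent removes exactly one coinversion. -/
lemma inverted_swap_iff {x : Equiv.Perm (Fin n)} {p q : Fin n} (hq : (q : ℕ) = p + 1)
    (hlt : x q < x p) {i j : Fin n} (hij : i < j) :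
    (x * Equiv.swap p q).symm j < (x * Equiv.swap p q).symm i ↔
      x.symm j < x.symm i ∧ ¬ (i = x q ∧ j = x p) := by
  have e : ∀ v, (x * Equiv.swap p q).symm v = Equiv.swap p q (x.symm v) := fun v => by
    rw [Equiv.symm_apply_eq]
    simp
  rw [e, e]
  obtain ⟨I, rfl⟩ := x.surjective i
  obtain ⟨J, rfl⟩ := x.surjective j
  simp only [Equiv.symm_apply_apply, x.injective.eq_iff]
  have h1 : ¬ (I = p ∧ J = q) := by
    rintro ⟨rfl, rfl⟩
    exact absurd hij (not_lt.mpr hlt.le)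
  have hIJ : I ≠ J := by
    rintro rfl
    exact lt_irrefl _ hij
  simp only [Equiv.swap_apply_def, Fin.ext_iff, Fin.lt_def] at *
  split_ifs <;> omega

/-! ### Down steps -/

/-- The properties of an exchange condition `P a c U` (the letters `a < c` may be exchanged when
preceded by the letters of `U`) that make it a congruence with interval classes: it only depends on
the letters of `U` strictly between `a` and `c`, and is inherited by pairs enclosing `a, c`. -/
def IsMono (P : Fin n → Fin n → Set (Fin n) → Prop) : Prop :=
  ∀ a c a₁ c₁ : Fin n, ∀ U U₁ : Set (Fin n), a₁ ≤ a → c ≤ c₁ →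
    (∀ v, a < v → v < c → (v ∈ U ↔ v ∈ U₁)) → P a c U → P a₁ c₁ U₁

/-- `y` arises from `x` by sorting an adjacent descent that satisfies the exchange condition. -/
def DownStep (P : Fin n → Fin n → Set (Fin n) → Prop) (x y : Equiv.Perm (Fin n)) : Prop :=
  ∃ p q : Fin n, (q : ℕ) = p + 1 ∧ y = x * Equiv.swap p q ∧ x q < x p ∧
    P (x q) (x p) {v | x.symm v < p}

variable {P : Fin n → Fin n → Set (Fin n) → Prop}

lemma DownStep.weakLE {x y : Equiv.Perm (Fin n)} (h : DownStep P x y) : weakLE y x := by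
  obtain ⟨p, q, hq, rfl, hlt, -⟩ := h
  intro i j hij hy
  exact ((inverted_swap_iff hq hlt hij).mp hy).1

lemma DownStep.not_weakLE {x y : Equiv.Perm (Fin n)} (h : DownStep P x y) :
    ¬ _root_.weakLE x y := by
  obtain ⟨p, q, hq, rfl, hlt, -⟩ := h
  intro hle
  have := hle (x q) (x p) hlt (by simp [Fin.lt_def, hq])
  exact ((inverted_swap_iff hq hlt hlt).mp this).2 ⟨rfl, rfl⟩

lemma weakLE_of_reduces {x y : Equiv.Perm (Fin n)} (h : Relation.ReflTransGen (DownStep P) x y) :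
    weakLE y x := by
  induction h with
  | refl => exact weakLE_refl _
  | tail _ h ih => exact weakLE_trans h.weakLE ih

lemma wf_weakLT :
    WellFounded (fun y x : Equiv.Perm (Fin n) => weakLE y x ∧ ¬ weakLE x y) := by
  have : IsTrans (Equiv.Perm (Fin n)) (fun y x => weakLE y x ∧ ¬ weakLE x y) :=
    ⟨fun _ _ _ h h' => ⟨weakLE_trans h.1 h'.1, fun h'' => h'.2 (weakLE_trans h'' h.1)⟩⟩
  have : Std.Irrefl (α := Equiv.Perm (Fin n)) (fun y x => weakLE y x ∧ ¬ weakLE x y) :=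
    ⟨fun _ h => h.2 h.1⟩
  exact Finite.wellFounded_of_trans_of_irrefl _

lemma exists_normal (x : Equiv.Perm (Fin n)) :
    ∃ m, Relation.ReflTransGen (DownStep P) x m ∧ ∀ z, ¬ DownStep P m z := by
  induction x using wf_weakLT.induction with
  | _ x ih =>
    by_cases hx : ∃ z, DownStep P x z
    · obtain ⟨z, hz⟩ := hx
      obtain ⟨m, hm, hn⟩ := ih z ⟨hz.weakLE, hz.not_weakLE⟩
      exact ⟨m, hm.head hz, hn⟩
    · exact ⟨x, .refl, not_exists.mp hx⟩

lemma eq_of_reduces_of_normal {m z : Equiv.Perm (Fin n)} (hm : ∀ z, ¬ DownStep P m z)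
    (h : Relation.ReflTransGen (DownStep P) m z) : z = m := by
  rcases h.cases_head with h | ⟨w, hw, -⟩
  · exact h.symm
  · exact absurd hw (hm w)

/-- Between a position satisfying `A` and a later one satisfying its negation there is an adjacent
switch. -/
lemma exists_switch (A : Fin n → Prop) (s t : Fin n) (hst : s < t) (hs : A s) (ht : ¬ A t) :
    ∃ p q : Fin n, (q : ℕ) = p + 1 ∧ s ≤ p ∧ q ≤ t ∧ A p ∧ ¬ A q := by
  by_contra hcon
  push Not at hcon
  have : ∀ d : ℕ, ∀ hd : (s : ℕ) + d < n, (s : ℕ) + d ≤ t → A ⟨s + d, hd⟩ := by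
    intro d
    induction d with
    | zero => intro _ _; exact hs
    | succ d ih =>
      intro hd hle
      exact hcon ⟨s + d, by omega⟩ ⟨s + (d + 1), hd⟩ (by simp; omega)
        (by simp [Fin.le_def]) (by simpa [Fin.le_def] using hle)
        (ih (by omega) (by omega))
  have h := this (t - s) (by omega) (by omega)
  have e : (⟨s + (t - s), by omega⟩ : Fin n) = t := by
    ext
    simp only
    omega
  exact ht (e ▸ h)

/-- If `x ≤ y` and `x` still has the coinversion removed by a down step of `y`, then `x` itself
admits a down step. -/
lemma exists_downStep (hP : IsMono P) {x y : Equiv.Perm (Fin n)} (hxy : weakLE x y)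
    {p q : Fin n} (hq : (q : ℕ) = p + 1) (hlt : y q < y p)
    (hyP : P (y q) (y p) {v | y.symm v < p})
    (hinv : x.symm (y p) < x.symm (y q)) : ∃ z, DownStep P x z := by
  -- A value strictly between `y q` and `y p` precedes `y p` in `x` iff it does so in `y`;
  -- otherwise it follows `y q` in both words.
  have hbefore : ∀ v, y q < v → v < y p →
      (x.symm v < x.symm (y p) ∧ y.symm v < p) ∨ (x.symm (y q) < x.symm v ∧ q < y.symm v) := by
    intro v hav hvc
    have h1 := hxy _ _ hav
    have h2 := hxy _ _ hvc
    have n1 : x.symm v ≠ x.symm (y p) := fun e => hvc.ne (x.symm.injective e)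
    have n2 : x.symm v ≠ x.symm (y q) := fun e => hav.ne' (x.symm.injective e)
    have n3 : y.symm v ≠ p := fun e => hvc.ne ((Equiv.symm_apply_eq y).mp e)
    have n4 : y.symm v ≠ q := fun e => hav.ne' ((Equiv.symm_apply_eq y).mp e)
    simp only [Equiv.symm_apply_apply, Fin.lt_def, ne_eq, Fin.ext_iff] at *
    omega
  obtain ⟨r, s, hs, hr1, hs1, hr2, hs2⟩ :=
    exists_switch (fun r => y p ≤ x r) _ _ hinv (by simp) (by simpa using hlt)
  have hs3 : x s ≤ y q := by
    by_contra hcon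
    have := hbefore (x s) (not_le.mp hcon) (not_le.mp hs2)
    simp only [Equiv.symm_apply_apply, Fin.lt_def, Fin.le_def] at *
    omega
  refine ⟨_, r, s, hs, rfl, hs3.trans_lt (hlt.trans_le hr2), ?_⟩
  refine hP _ _ _ _ _ _ hs3 hr2 ?_ hyP
  intro v h1 h2
  have := hbefore v h1 h2
  simp only [Set.mem_ofPred_eq, Fin.lt_def, Fin.le_def] at *
  omega

/-- Down steps lift along the weak order. -/
lemma lift_step (hP : IsMono P) {y y' : Equiv.Perm (Fin n)} (hy : DownStep P y y')
    (x : Equiv.Perm (Fin n)) (hxy : weakLE x y) :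
    ∃ x', Relation.ReflTransGen (DownStep P) x x' ∧ weakLE x' y' := by
  induction x using wf_weakLT.induction with
  | _ x ih =>
    obtain ⟨p, q, hq, rfl, hlt, hyP⟩ := hy
    by_cases hinv : x.symm (y p) < x.symm (y q)
    · obtain ⟨z, hz⟩ := exists_downStep hP hxy hq hlt hyP hinv
      obtain ⟨x', h1, h2⟩ := ih z ⟨hz.weakLE, hz.not_weakLE⟩ (weakLE_trans hz.weakLE hxy)
      exact ⟨x', h1.head hz, h2⟩
    · refine ⟨x, .refl, fun i j hij hx => ?_⟩
      refine (inverted_swap_iff hq hlt hij).mpr ⟨hxy i j hij hx, ?_⟩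
      rintro ⟨rfl, rfl⟩
      exact hinv hx

lemma lift_reduces (hP : IsMono P) {x y y' : Equiv.Perm (Fin n)} (hxy : weakLE x y)
    (h : Relation.ReflTransGen (DownStep P) y y') :
    ∃ x', Relation.ReflTransGen (DownStep P) x x' ∧ weakLE x' y' := by
  induction h with
  | refl => exact ⟨x, .refl, hxy⟩
  | tail _ hs ih =>
    obtain ⟨z, hz, hle⟩ := ih
    obtain ⟨x', hx', hle'⟩ := lift_step hP hs z hle
    exact ⟨x', hz.trans hx', hle'⟩

/-! ### Minima of classes -/

lemma normal_le (hP : IsMono P) {x m y : Equiv.Perm (Fin n)} (hm : ∀ z, ¬ DownStep P m z)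
    (hmx : weakLE m x) (hxy : Relation.ReflTransGen (DownStep P) x y) : weakLE m y := by
  obtain ⟨z, hz, hle⟩ := lift_reduces hP hmx hxy
  rwa [eq_of_reduces_of_normal hm hz] at hle

lemma reduces_of_eqvGen (hP : IsMono P) {m : Equiv.Perm (Fin n)} (hm : ∀ z, ¬ DownStep P m z)
    {x y : Equiv.Perm (Fin n)} (h : Relation.EqvGen (DownStep P) x y) :
    Relation.ReflTransGen (DownStep P) x m ↔ Relation.ReflTransGen (DownStep P) y m := by
  induction h with
  | rel x y h =>
    refine ⟨fun hx => ?_, fun hy => hy.head h⟩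
    -- The normal forms `m` of `x` and `m'` of `y` are both below `x` and hence below each other.
    obtain ⟨m', hm', hn'⟩ := exists_normal (P := P) y
    have hxm' := hm'.head h
    have e : m = m' := weakLE_antisymm (normal_le hP hm (weakLE_of_reduces hx) hxm')
      (normal_le hP hn' (weakLE_of_reduces hxm') hx)
    exact e ▸ hm'
  | refl x => rfl
  | symm _ _ _ ih => exact ih.symm
  | trans _ _ _ _ _ ih1 ih2 => exact ih1.trans ih2

lemma eqvGen_of_reduces {x y : Equiv.Perm (Fin n)}
    (h : Relation.ReflTransGen (DownStep P) x y) : Relation.EqvGen (DownStep P) x y := by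
  induction h with
  | refl => exact .refl _
  | tail _ h ih => exact ih.trans _ _ _ (.rel _ _ h)

/-- Every class has a weak-order minimum, and contains all permutations between this minimum and
any of its members. -/
lemma exists_minimum (hP : IsMono P) (τ : Equiv.Perm (Fin n)) :
    ∃ μ, Relation.EqvGen (DownStep P) μ τ ∧
      (∀ σ, Relation.EqvGen (DownStep P) σ τ → weakLE μ σ) ∧
      ∀ σ ω, Relation.EqvGen (DownStep P) ω τ → weakLE μ σ → weakLE σ ω →
        Relation.EqvGen (DownStep P) σ τ := by
  obtain ⟨μ, hμ, hn⟩ := exists_normal (P := P) τ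
  have hμτ := (eqvGen_of_reduces hμ).symm
  refine ⟨μ, hμτ, fun σ hσ => weakLE_of_reduces ((reduces_of_eqvGen hP hn hσ).mpr hμ), ?_⟩
  intro σ ω hω h1 h2
  obtain ⟨z, hz, hle⟩ := lift_reduces hP h2 ((reduces_of_eqvGen hP hn hω).mpr hμ)
  have e : z = μ := weakLE_antisymm hle (normal_le hP hn h1 hz)
  subst e
  exact (eqvGen_of_reduces hz).trans _ _ _ hμτ

/-! ### Reversal of words -/

lemma IsMono.compl (hP : IsMono P) : IsMono (fun a c U => P a c Uᶜ) := by
  intro a c a₁ c₁ U U₁ h1 h2 h3 h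
  exact hP a c a₁ c₁ Uᶜ U₁ᶜ h1 h2 (fun v hv hv' => not_congr (h3 v hv hv')) h

lemma mul_revPerm_symm (x : Equiv.Perm (Fin n)) (v : Fin n) :
    (x * Fin.revPerm).symm v = (x.symm v).rev := by
  rw [Equiv.symm_apply_eq]
  simp

lemma weakLE_rev {x y : Equiv.Perm (Fin n)} (h : weakLE x y) :
    weakLE (y * Fin.revPerm) (x * Fin.revPerm) := by
  intro i j hij hy
  rw [mul_revPerm_symm, mul_revPerm_symm, Fin.rev_lt_rev] at *
  by_contra hcon
  have hne : x.symm i ≠ x.symm j := fun e => hij.ne (x.symm.injective e)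
  exact absurd (h i j hij (lt_of_le_of_ne (not_lt.mp hcon) hne.symm)) (not_lt.mpr hy.le)

lemma mul_rev_rev (x : Equiv.Perm (Fin n)) : x * Fin.revPerm * Fin.revPerm = x := by
  ext v
  simp

lemma downStep_rev (hP : IsMono P) {x y : Equiv.Perm (Fin n)} (h : DownStep P x y) :
    DownStep (fun a c U => P a c Uᶜ) (y * Fin.revPerm) (x * Fin.revPerm) := by
  obtain ⟨p, q, hq, rfl, hlt, hp⟩ := h
  refine ⟨q.rev, p.rev, ?_, ?_, ?_, ?_⟩
  · simp only [Fin.val_rev]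
    omega
  · ext v
    simp only [Equiv.Perm.mul_apply, Fin.revPerm_apply, Equiv.swap_apply_def]
    congr 2
    simp only [Fin.ext_iff] at *
    split_ifs <;> simp only [Fin.val_rev] at * <;> omega
  · simpa using hlt
  · refine hP _ _ _ _ _ _ ?_ ?_ ?_ hp
    · simp
    · simp
    · intro v h1 h2
      have n3 : x.symm v ≠ p := fun e => h2.ne ((Equiv.symm_apply_eq x).mp e)
      have n4 : x.symm v ≠ q := fun e => h1.ne' ((Equiv.symm_apply_eq x).mp e)
      have e : (x * Equiv.swap p q).symm v = x.symm v := by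
        rw [Equiv.symm_apply_eq]
        simp [Equiv.swap_apply_of_ne_of_ne n3 n4]
      simp only [Set.mem_compl_iff, Set.mem_ofPred_eq, mul_revPerm_symm, Fin.rev_lt_rev, e]
      simp only [ne_eq, Fin.ext_iff, Fin.lt_def] at *
      omega

lemma eqvGen_rev (hP : IsMono P) {x y : Equiv.Perm (Fin n)}
    (h : Relation.EqvGen (DownStep P) x y) :
    Relation.EqvGen (DownStep (fun a c U => P a c Uᶜ)) (x * Fin.revPerm) (y * Fin.revPerm) := by
  induction h with
  | rel x y h => exact .symm _ _ (.rel _ _ (downStep_rev hP h))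
  | refl x => exact .refl _
  | symm _ _ _ ih => exact ih.symm
  | trans _ _ _ _ _ ih1 ih2 => exact ih1.trans _ _ _ ih2

lemma eqvGen_rev_iff (hP : IsMono P) {x y : Equiv.Perm (Fin n)} :
    Relation.EqvGen (DownStep (fun a c U => P a c Uᶜ)) (x * Fin.revPerm) (y * Fin.revPerm) ↔
      Relation.EqvGen (DownStep P) x y := by
  refine ⟨fun h => ?_, eqvGen_rev hP⟩
  have := eqvGen_rev hP.compl h
  simpa only [mul_rev_rev, compl_compl] using this

lemma classes_intervals (hP : IsMono P) (τ : Equiv.Perm (Fin n)) :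
    ∃ μ ω, Relation.EqvGen (DownStep P) μ τ ∧ Relation.EqvGen (DownStep P) ω τ ∧
      ∀ σ, Relation.EqvGen (DownStep P) σ τ ↔ weakLE μ σ ∧ weakLE σ ω := by
  obtain ⟨μ, h1, h2, h3⟩ := exists_minimum hP τ
  obtain ⟨ω, h4, h5, -⟩ := exists_minimum hP.compl (τ * Fin.revPerm)
  have h6 : Relation.EqvGen (DownStep P) (ω * Fin.revPerm) τ := by
    rw [← eqvGen_rev_iff hP, mul_rev_rev]
    exact h4
  refine ⟨μ, ω * Fin.revPerm, h1, h6, fun σ => ⟨fun h => ⟨h2 σ h, ?_⟩, fun h => ?_⟩⟩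
  · simpa only [mul_rev_rev] using weakLE_rev (h5 _ ((eqvGen_rev_iff hP).mpr h))
  · exact h3 σ _ h6 h.1 h.2

/-! ### The Cambrian exchange condition -/

/-- The Cambrian exchange condition.  All letters of `[a', c']` are different from `a` and `c`, so
those after the pair are those not in `U`. -/
def cambCond (k : ℕ) (ε : Fin n → Bool) (a c : Fin n) (U : Set (Fin n)) : Prop :=
  open Classical in
  ∃ a' c' : Fin n, a < a' ∧ a' < c' ∧ c' < c ∧
    ((Finset.univ.filter (fun v => a' ≤ v ∧ v ≤ c' ∧ ε v = false ∧ v ∉ U)).card + k ≤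
      (Finset.univ.filter (fun v => a' ≤ v ∧ v ≤ c' ∧ ε v = true ∧ v ∈ U)).card ∨
     (Finset.univ.filter (fun v => a' ≤ v ∧ v ≤ c' ∧ ε v = true ∧ v ∈ U)).card + k ≤
      (Finset.univ.filter (fun v => a' ≤ v ∧ v ≤ c' ∧ ε v = false ∧ v ∉ U)).card)

lemma isMono_cambCond (k : ℕ) (ε : Fin n → Bool) : IsMono (cambCond k ε) := by
  classical
  rintro a c a₁ c₁ U U₁ ha hc hU ⟨a', c', h1, h2, h3, h⟩
  refine ⟨a', c', ha.trans_lt h1, h2, h3.trans_le hc, ?_⟩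
  have e1 : ∀ v, (a' ≤ v ∧ v ≤ c' ∧ ε v = false ∧ v ∉ U₁) ↔
      (a' ≤ v ∧ v ≤ c' ∧ ε v = false ∧ v ∉ U) := by
    intro v
    have := fun x y => hU v (h1.trans_le x) (lt_of_le_of_lt y h3)
    tauto
  have e2 : ∀ v, (a' ≤ v ∧ v ≤ c' ∧ ε v = true ∧ v ∈ U₁) ↔
      (a' ≤ v ∧ v ≤ c' ∧ ε v = true ∧ v ∈ U) := by
    intro v
    have := fun x y => hU v (h1.trans_le x) (lt_of_le_of_lt y h3)
    tauto
  simpa only [e1, e2] using h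

lemma cambStep_iff (k : ℕ) (ε : Fin n → Bool) (x y : Equiv.Perm (Fin n)) :
    cambStep k ε x y ↔ ∃ p q : Fin n, (q : ℕ) = p + 1 ∧ y = x * Equiv.swap p q ∧
      cambCond k ε (min (x p) (x q)) (max (x p) (x q)) {v | x.symm v < p} := by
  classical
  refine exists_congr fun p => exists_congr fun q => and_congr_right fun hq =>
    and_congr_right fun _ => exists_congr fun a' => exists_congr fun c' =>
    and_congr_right fun h1 => and_congr_right fun h2 => and_congr_right fun h3 => ?_
  have e1 : ∀ v, (a' ≤ v ∧ v ≤ c' ∧ ε v = false ∧ q < x.symm v) ↔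
      (a' ≤ v ∧ v ≤ c' ∧ ε v = false ∧ v ∉ {v | x.symm v < p}) := by
    intro v
    refine and_congr_right fun hv => and_congr_right fun hv' => and_congr_right fun _ => ?_
    have n3 : x.symm v ≠ p := by
      rintro rfl
      simp only [Equiv.apply_symm_apply, Fin.lt_def, Fin.le_def, Fin.coe_min, Fin.coe_max] at *
      omega
    have n4 : x.symm v ≠ q := by
      rintro rfl
      simp only [Equiv.apply_symm_apply, Fin.lt_def, Fin.le_def, Fin.coe_min, Fin.coe_max] at *
      omega
    simp only [Set.mem_ofPred_eq, ne_eq, Fin.ext_iff, Fin.lt_def] at *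
    omega
  simp only [e1, Set.mem_ofPred_eq]

lemma eqvGen_cambStep_iff (k : ℕ) (ε : Fin n → Bool) (x y : Equiv.Perm (Fin n)) :
    cambCong k ε x y ↔ Relation.EqvGen (DownStep (cambCond k ε)) x y := by
  constructor
  · intro h
    induction h with
    | rel x y h =>
      rw [cambStep_iff] at h
      obtain ⟨p, q, hq, rfl, h⟩ := h
      have hne : x p ≠ x q := fun e => by
        have := x.injective e
        simp [this] at hq
      rcases lt_or_gt_of_ne hne with hlt | hlt
      -- An ascent of `x` becomes a descent after the exchange: the down step ends at `x`.
      · refine .symm _ _ (.rel _ _ ⟨p, q, hq, ?_, by simpa using hlt, ?_⟩)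
        · ext v
          simp
        · rw [min_eq_left hlt.le, max_eq_right hlt.le] at h
          refine isMono_cambCond k ε _ _ _ _ _ _ (by simp) (by simp) ?_ h
          intro v h1 h2
          have n3 : x.symm v ≠ p := fun e => h1.ne' ((Equiv.symm_apply_eq x).mp e)
          have n4 : x.symm v ≠ q := fun e => h2.ne ((Equiv.symm_apply_eq x).mp e)
          have e : (x * Equiv.swap p q).symm v = x.symm v := by
            rw [Equiv.symm_apply_eq]
            simp [Equiv.swap_apply_of_ne_of_ne n3 n4]
          simp [e]
      · rw [min_eq_right hlt.le, max_eq_left hlt.le] at h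
        exact .rel _ _ ⟨p, q, hq, rfl, hlt, h⟩
    | refl x => exact .refl _
    | symm _ _ _ ih => exact ih.symm
    | trans _ _ _ _ _ ih1 ih2 => exact ih1.trans _ _ _ ih2
  · refine fun h => Relation.EqvGen.mono ?_ _ _ h
    rintro x y ⟨p, q, hq, rfl, hlt, h⟩
    refine (cambStep_iff k ε _ _).mpr ⟨p, q, hq, rfl, ?_⟩
    rwa [min_eq_right hlt.le, max_eq_left hlt.le]

end CambrianTwist

/-- For `k ≥ 1`, `n ≥ 1` and any signature `ε`, every class of the
Cambrian `(k,ε)`-twist congruence on `S_n` is an interval of the weak order: it has a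
weak-order minimum `μ` and maximum `ω` and consists of the permutations `σ` with
`μ ≤ σ ≤ ω`. -/
theorem cambrian_classes_are_weak_order_intervals
    (k n : ℕ) (hk : 1 ≤ k) (hn : 1 ≤ n) (ε : Fin n → Bool) (τ : Equiv.Perm (Fin n)) :
    ∃ μ ω : Equiv.Perm (Fin n), cambCong k ε μ τ ∧ cambCong k ε ω τ ∧
      ∀ σ : Equiv.Perm (Fin n), (cambCong k ε σ τ ↔ (weakLE μ σ ∧ weakLE σ ω)) := by
  simp only [CambrianTwist.eqvGen_cambStep_iff]
  exact CambrianTwist.classes_intervals (CambrianTwist.isMono_cambCond k ε) τ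
end

section
/- Fix an integer k ≥ 1, signatures ε ∈ {+,−}ⁿ and ε' ∈ {+,−}^{n'}, and permutations τ ∈ S_n, τ' ∈ S_{n'}. Let εε' ∈ {+,−}^{n+n'} be the concatenated signature with (εε')_i = ε_i for i ≤ n and (εε')_i = ε'_{i−n} for i > n, and let X ⊆ S_{n+n'} be the union of the shifted shuffles ρ ⧢ ρ' over all ρ ∈ S_n with ρ ≡ᵏ_ε τ and all ρ' ∈ S_{n'} with ρ' ≡ᵏ_{ε'} τ'. Then X is a union of ≡ᵏ_{εε'}-classes of S_{n+n'}: if σ ∈ X and σ ≡ᵏ_{εε'} σ̃, then σ̃ ∈ X. -/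
/-- `σ` belongs to the shifted shuffle `τ ⧢ τ'`: the values `0,…,n-1` appear in `σ` in the
same relative order as in `τ`, and the values `n,…,n+n'-1` appear in `σ` in the same
relative order as in the shifted word of `τ'`. -/
def shiftedShuffleMem {n n' : ℕ} (τ : Equiv.Perm (Fin n)) (τ' : Equiv.Perm (Fin n'))
    (σ : Equiv.Perm (Fin (n + n'))) : Prop :=
  (∀ i j : Fin n,
    (σ.symm (Fin.castAdd n' i) < σ.symm (Fin.castAdd n' j) ↔ τ.symm i < τ.symm j)) ∧
  (∀ i j : Fin n',
    (σ.symm (Fin.natAdd n i) < σ.symm (Fin.natAdd n j) ↔ τ'.symm i < τ'.symm j))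

/-- Exchanging two adjacent positions affects only their own comparison. -/
lemma swap_lt_swap_iff {N : ℕ} {p q : Fin N} (h : (q : ℕ) = p + 1) (r s : Fin N) :
    Equiv.swap p q r < Equiv.swap p q s ↔
      (r = q ∧ s = p) ∨ (¬ (r = p ∧ s = q) ∧ r < s) := by
  simp only [Equiv.swap_apply_def, Fin.lt_def, Fin.ext_iff]
  split_ifs <;> omega

lemma cambStep_symm {k n : ℕ} {ε : Fin n → Bool} {τ τ' : Equiv.Perm (Fin n)}
    (h : cambStep k ε τ τ') : cambStep k ε τ' τ := by
  obtain ⟨p, q, hpq, rfl, a, c, h1, h2, h3, h4⟩ := h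
  -- The values before position `p` and those after position `q` are the same for both words.
  have hq : ∀ v, q < (τ * Equiv.swap p q).symm v ↔ q < τ.symm v := by
    intro v
    change q < Equiv.swap p q (τ.symm v) ↔ _
    simp only [Equiv.swap_apply_def, Fin.lt_def, Fin.ext_iff]
    split_ifs <;> omega
  have hp : ∀ v, (τ * Equiv.swap p q).symm v < p ↔ τ.symm v < p := by
    intro v
    change Equiv.swap p q (τ.symm v) < p ↔ _
    simp only [Equiv.swap_apply_def, Fin.lt_def, Fin.ext_iff]
    split_ifs <;> omega
  refine ⟨p, q, hpq, by simp [mul_assoc], a, c, ?_, h2, ?_, ?_⟩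
  · simpa [min_comm] using h1
  · simpa [max_comm] using h3
  · simpa only [hq, hp] using h4

/-- If `f` embeds `Fin m` as an interval of values of `Fin N` and `ρ` is the standardization of the
subword of `σ` on these values, then a step from `σ` induces a step from `ρ` or leaves `ρ` fixed. -/
lemma exists_step_of_embedding {k m N : ℕ} {η : Fin m → Bool} {ε : Fin N → Bool}
    (f : Fin m ↪o Fin N) (hf : (Set.range f).OrdConnected) (hε : ∀ i, ε (f i) = η i)
    {ρ : Equiv.Perm (Fin m)} {σ σt : Equiv.Perm (Fin N)}
    (hρ : ∀ i j, σ.symm (f i) < σ.symm (f j) ↔ ρ.symm i < ρ.symm j)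
    (hstep : cambStep k ε σ σt) :
    ∃ ρt : Equiv.Perm (Fin m), (ρt = ρ ∨ cambStep k η ρ ρt) ∧
      ∀ i j, σt.symm (f i) < σt.symm (f j) ↔ ρt.symm i < ρt.symm j := by
  obtain ⟨p, q, hpq, rfl, a, c, h1, h2, h3, h4⟩ := hstep
  have hsw : ∀ v, (σ * Equiv.swap p q).symm v = Equiv.swap p q (σ.symm v) := fun v => rfl
  by_cases hxy : (∃ x, f x = σ p) ∧ ∃ y, f y = σ q
  · obtain ⟨⟨x, hx⟩, y, hy⟩ := hxy
    have hpx : p = σ.symm (f x) := by simp [hx]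
    have hqy : q = σ.symm (f y) := by simp [hy]
    have hPQ : ρ.symm x < ρ.symm y := by
      rw [← hρ, ← hpx, ← hqy, Fin.lt_def]; omega
    -- A letter strictly between `x` and `y` in `ρ` would sit strictly between `p` and `p+1` in `σ`.
    have hadj : ((ρ.symm y : Fin m) : ℕ) = (ρ.symm x : Fin m) + 1 := by
      by_contra hne
      have hlt : ((ρ.symm x : Fin m) : ℕ) + 1 < (ρ.symm y : Fin m) := by
        rw [Fin.lt_def] at hPQ; omega
      let R : Fin m := ⟨(ρ.symm x : Fin m) + 1, hlt.trans (ρ.symm y).isLt⟩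
      have e1 := (hρ x (ρ R)).2 (by simp [R, Fin.lt_def])
      have e2 := (hρ (ρ R) y).2 (by simpa [R, Fin.lt_def] using hlt)
      rw [← hpx, Fin.lt_def] at e1
      rw [← hqy, Fin.lt_def] at e2
      omega
    rw [← hx, ← hy, ← f.monotone.map_min] at h1
    rw [← hx, ← hy, ← f.monotone.map_max] at h3
    have hconv : ∀ v, f (min x y) ≤ v → v ≤ f (max x y) → ∃ w, f w = v := fun v hv hv' =>
      hf.out (Set.mem_range_self _) (Set.mem_range_self _) ⟨hv, hv'⟩
    obtain ⟨a, rfl⟩ := hconv a h1.le (h2.le.trans h3.le)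
    obtain ⟨c, rfl⟩ := hconv c (h1.le.trans h2.le) h3.le
    have hcard1 : (Finset.univ.filter (fun v : Fin N =>
          f a ≤ v ∧ v ≤ f c ∧ ε v = false ∧ q < σ.symm v)).card =
        (Finset.univ.filter (fun v : Fin m =>
          a ≤ v ∧ v ≤ c ∧ η v = false ∧ ρ.symm y < ρ.symm v)).card := by
      rw [← Finset.card_map f.toEmbedding]
      congr 1
      ext v
      simp only [Finset.mem_filter, Finset.mem_univ, true_and, Finset.mem_map,
        RelEmbedding.coe_toEmbedding]
      constructor
      · rintro ⟨ha, hc, he, hv⟩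
        obtain ⟨w, rfl⟩ := hconv v (h1.le.trans ha) (hc.trans h3.le)
        exact ⟨w, ⟨f.le_iff_le.1 ha, f.le_iff_le.1 hc, by rw [← hε, he],
          (hρ _ _).1 (by rwa [← hqy])⟩, rfl⟩
      · rintro ⟨w, ⟨ha, hc, he, hv⟩, rfl⟩
        exact ⟨f.le_iff_le.2 ha, f.le_iff_le.2 hc, by rw [hε, he],
          by rw [hqy]; exact (hρ _ _).2 hv⟩
    have hcard2 : (Finset.univ.filter (fun v : Fin N =>
          f a ≤ v ∧ v ≤ f c ∧ ε v = true ∧ σ.symm v < p)).card =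
        (Finset.univ.filter (fun v : Fin m =>
          a ≤ v ∧ v ≤ c ∧ η v = true ∧ ρ.symm v < ρ.symm x)).card := by
      rw [← Finset.card_map f.toEmbedding]
      congr 1
      ext v
      simp only [Finset.mem_filter, Finset.mem_univ, true_and, Finset.mem_map,
        RelEmbedding.coe_toEmbedding]
      constructor
      · rintro ⟨ha, hc, he, hv⟩
        obtain ⟨w, rfl⟩ := hconv v (h1.le.trans ha) (hc.trans h3.le)
        exact ⟨w, ⟨f.le_iff_le.1 ha, f.le_iff_le.1 hc, by rw [← hε, he],
          (hρ _ _).1 (by rwa [← hpx])⟩, rfl⟩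
      · rintro ⟨w, ⟨ha, hc, he, hv⟩, rfl⟩
        exact ⟨f.le_iff_le.2 ha, f.le_iff_le.2 hc, by rw [hε, he],
          by rw [hpx]; exact (hρ _ _).2 hv⟩
    rw [hcard1, hcard2] at h4
    refine ⟨ρ * Equiv.swap (ρ.symm x) (ρ.symm y), Or.inr ⟨ρ.symm x, ρ.symm y, hadj, rfl, a, c,
      by simpa using f.lt_iff_lt.1 h1, f.lt_iff_lt.1 h2, by simpa using f.lt_iff_lt.1 h3, h4⟩, ?_⟩
    intro i j
    have hsw' : ∀ v, (ρ * Equiv.swap (ρ.symm x) (ρ.symm y)).symm v =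
      Equiv.swap (ρ.symm x) (ρ.symm y) (ρ.symm v) := fun v => rfl
    rw [hsw, hsw, hsw', hsw', swap_lt_swap_iff hpq, swap_lt_swap_iff hadj, hρ, hpx, hqy]
    simp only [EmbeddingLike.apply_eq_iff_eq]
  · refine ⟨ρ, Or.inl rfl, fun i j => ?_⟩
    rw [hsw, hsw, swap_lt_swap_iff hpq, hρ]
    have key : ∀ i j, ¬ (σ.symm (f i) = p ∧ σ.symm (f j) = q) := by
      rintro i j ⟨hi, hj⟩
      exact hxy ⟨⟨i, by simp [← hi]⟩, j, by simp [← hj]⟩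
    have := key i j
    have := key j i
    tauto

/-- For `k ≥ 1`, signatures `ε`, `ε'` and permutations `τ ∈ S_n`,
`τ' ∈ S_{n'}`, the union of the shifted shuffles `ρ ⧢ ρ'` over the Cambrian classes of `τ`
and `τ'` is a union of Cambrian `(k,εε')`-twist congruence classes of `S_{n+n'}`, where
`εε'` is the concatenated signature. -/
theorem cambrian_shuffle_is_union_of_classes
    (k : ℕ) (hk : 1 ≤ k) (n n' : ℕ) (ε : Fin n → Bool) (ε' : Fin n' → Bool)
    (τ : Equiv.Perm (Fin n)) (τ' : Equiv.Perm (Fin n'))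
    (σ σt : Equiv.Perm (Fin (n + n')))
    (hσ : ∃ (ρ : Equiv.Perm (Fin n)) (ρ' : Equiv.Perm (Fin n')),
      cambCong k ε ρ τ ∧ cambCong k ε' ρ' τ' ∧ shiftedShuffleMem ρ ρ' σ)
    (hcong : cambCong k (fun i => Fin.addCases (motive := fun _ => Bool) ε ε' i) σ σt) :
    ∃ (ρ : Equiv.Perm (Fin n)) (ρ' : Equiv.Perm (Fin n')),
      cambCong k ε ρ τ ∧ cambCong k ε' ρ' τ' ∧ shiftedShuffleMem ρ ρ' σt := by
  -- Stability of `X` under a single step.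
  have main : ∀ s t : Equiv.Perm (Fin (n + n')),
      cambStep k (fun i => Fin.addCases (motive := fun _ => Bool) ε ε' i) s t →
      (∃ (ρ : Equiv.Perm (Fin n)) (ρ' : Equiv.Perm (Fin n')),
        cambCong k ε ρ τ ∧ cambCong k ε' ρ' τ' ∧ shiftedShuffleMem ρ ρ' s) →
      ∃ (ρ : Equiv.Perm (Fin n)) (ρ' : Equiv.Perm (Fin n')),
        cambCong k ε ρ τ ∧ cambCong k ε' ρ' τ' ∧ shiftedShuffleMem ρ ρ' t := by
    rintro s t hst ⟨ρ, ρ', h, hcls, hs, hs'⟩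
    obtain ⟨r, hr, hrt⟩ := exists_step_of_embedding (η := ε) (Fin.castAddOrderEmb n')
      (by
        refine ⟨?_⟩
        rintro _ ⟨i, rfl⟩ _ ⟨j, rfl⟩ v ⟨_, hv⟩
        have hv' : (v : ℕ) ≤ j := hv
        exact ⟨⟨v, by omega⟩, rfl⟩)
      (fun i => by simp) hs hst
    obtain ⟨r', hr', hrt'⟩ := exists_step_of_embedding (η := ε') (Fin.natAddOrderEmb n)
      (by
        refine ⟨?_⟩
        rintro _ ⟨i, rfl⟩ _ ⟨j, rfl⟩ v ⟨hv, _⟩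
        have hv' : n + (i : ℕ) ≤ v := hv
        refine ⟨⟨v - n, by omega⟩, Fin.ext ?_⟩
        simp
        omega)
      (fun i => by simp) hs' hst
    refine ⟨r, r', ?_, ?_, hrt, hrt'⟩
    · rcases hr with rfl | hr
      · exact h
      · exact .trans _ _ _ (.symm _ _ (.rel _ _ hr)) h
    · rcases hr' with rfl | hr'
      · exact hcls
      · exact .trans _ _ _ (.symm _ _ (.rel _ _ hr')) hcls
  -- An invariant of single steps in both directions is an invariant of the generated equivalence.
  refine (Relation.EqvGen.rec (motive := fun s t _ =>
    (∃ (ρ : Equiv.Perm (Fin n)) (ρ' : Equiv.Perm (Fin n')),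
        cambCong k ε ρ τ ∧ cambCong k ε' ρ' τ' ∧ shiftedShuffleMem ρ ρ' s) ↔
      ∃ (ρ : Equiv.Perm (Fin n)) (ρ' : Equiv.Perm (Fin n')),
        cambCong k ε ρ τ ∧ cambCong k ε' ρ' τ' ∧ shiftedShuffleMem ρ ρ' t)
    ?_ ?_ ?_ ?_ hcong).1 hσ
  · exact fun s t hst => ⟨main s t hst, main t s (cambStep_symm hst)⟩
  · exact fun _ => Iff.rfl
  · exact fun _ _ _ h => h.symm
  · exact fun _ _ _ _ _ h h' => h.trans h'
end

section
/- For all integers k ≥ 1 and n ≥ 1, the k-hypertwist congruence ≡ᵏ on the set of ordered partitions of [n] is a lattice congruence of the weak order on ordered partitions: every ≡ᵏ-class is an interval of the weak order (it has a minimum and a maximum and consists of all ordered partitions between them), and whenever λ ≤ λ' in the weak order, the minimum of the class of λ is ≤ the minimum of the class of λ', and the maximum of the class of λ is ≤ the maximum of the class of λ'. -/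
/-!
The proof rests on a monotone class invariant. For `i < j`, let `later f i j` be the set of elements
`b` with `i < b < j` lying strictly after `i`, and let the truncated coinversion `trunc k f i j` be
the coinversion value of `(i, j)` if `later f i j` has fewer than `k` elements, and `-1` otherwise.

* `trunc` is monotone for the weak order (`trunc_mono`): going up shrinks the sets `later`.
* `trunc` is constant on congruence classes (`trunc_eq_of_cong`): a rewriting rule on parts `a`, `c`
  only changes the relative order of `a` and `c`, and its witnesses force truncation at every pair
  that could notice the change.
* If `lam` is irreducible, meaning that no rewriting rule can lower its coinversions, then `lam` is
  below every `mu` with `trunc lam ≤ trunc mu` (`Irred.le_of_trunc_le`): every pair `i < j` with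
  `j` weakly before `i` is joined by a decreasing chain of untruncated pairs.

An element of a class with minimal total coinversion is irreducible, and by the three facts it is
the minimum of its class and depends monotonically on the class. Reversing `[n]` reverses the weak
order and preserves the congruence, which gives the maxima. Finally, monotonicity of the minima
shows that whatever lies between the minimum and the maximum of a class is in the class.
-/


/-- An ordered partition of `[n]`: a sequence of `parts` pairwise disjoint nonempty blocks
covering `[n]`, encoded by the surjection sending each element to the index of its block. -/
structure OrderedPartition (n : ℕ) where
  parts : ℕ
  idx : Fin n → Fin parts
  surj : Function.Surjective idx

/-- The coinversion map of an ordered partition: for `i < j` it is `-1`, `0`, or `1`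
according to whether the block of `i` comes strictly before, equals, or comes strictly
after the block of `j`. -/
def opCoinv {n : ℕ} (lam : OrderedPartition n) (i j : Fin n) : ℤ :=
  if lam.idx i < lam.idx j then -1 else if lam.idx i = lam.idx j then 0 else 1

/-- The weak order on ordered partitions: `λ ≤ λ'` iff `coinv(λ)(i,j) ≤ coinv(λ')(i,j)`
for all `i < j`. -/
def opLE {n : ℕ} (lam mu : OrderedPartition n) : Prop :=
  ∀ i j : Fin n, i < j → opCoinv lam i j ≤ opCoinv mu i j

/-- The witness condition for the `k`-hypertwist rewriting rules between the adjacent parts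
at positions `t` and `t1 = t+1`: there exist `k` elements `b` in later parts with
`max(a) < b < min(c)`, where `{a, c}` are the two adjacent parts (in one of the two
possible roles). -/
def opWitness (k : ℕ) {n p : ℕ} (f : Fin n → Fin p) (t t1 : Fin p) : Prop :=
  k ≤ (Finset.univ.filter (fun b : Fin n =>
      t1 < f b ∧ (∀ x : Fin n, f x = t → x < b) ∧ (∀ y : Fin n, f y = t1 → b < y))).card ∨
  k ≤ (Finset.univ.filter (fun b : Fin n =>
      t1 < f b ∧ (∀ x : Fin n, f x = t1 → x < b) ∧ (∀ y : Fin n, f y = t → b < y))).card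

/-- Rewriting step `U | a | c | V ≡ᵏ U | c | a | V`: swap two adjacent parts, subject to
the witness condition. -/
def opSwapStep (k : ℕ) {n : ℕ} (lam mu : OrderedPartition n) : Prop :=
  lam.parts = mu.parts ∧
  ∃ t t1 : Fin lam.parts, (t1 : ℕ) = (t : ℕ) + 1 ∧
    (∀ x : Fin n, (mu.idx x : ℕ) = ((Equiv.swap t t1) (lam.idx x) : ℕ)) ∧
    opWitness k lam.idx t t1

/-- Rewriting step `U | a | c | V ≡ᵏ U | ac | V` (or `U | c | a | V ≡ᵏ U | ac | V`):
merge two adjacent parts, subject to the witness condition. -/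
def opMergeStep (k : ℕ) {n : ℕ} (lam mu : OrderedPartition n) : Prop :=
  mu.parts + 1 = lam.parts ∧
  ∃ t t1 : Fin lam.parts, (t1 : ℕ) = (t : ℕ) + 1 ∧
    (∀ x : Fin n, (mu.idx x : ℕ) =
      (if (lam.idx x : ℕ) ≤ (t : ℕ) then (lam.idx x : ℕ) else (lam.idx x : ℕ) - 1)) ∧
    opWitness k lam.idx t t1

/-- The `k`-hypertwist congruence on ordered partitions of `[n]`: the equivalence relation
generated by the swap and merge rewriting rules. -/
def opCong (k : ℕ) {n : ℕ} : OrderedPartition n → OrderedPartition n → Prop :=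
  Relation.EqvGen (fun a b => opSwapStep k a b ∨ opMergeStep k a b)

namespace Hypertwist

variable {n : ℕ}

/-! ### Truncated coinversions -/

/-- The block index of an element, as a natural number. -/
def pos (lam : OrderedPartition n) (x : Fin n) : ℕ := lam.idx x

/-- Coinversion of the preorder on `[n]` given by a position function `f`. -/
def cv (f : Fin n → ℕ) (i j : Fin n) : ℤ :=
  if f i < f j then -1 else if f i = f j then 0 else 1

lemma opCoinv_eq (lam : OrderedPartition n) (i j : Fin n) : opCoinv lam i j = cv (pos lam) i j := by
  simp only [opCoinv, cv, pos, Fin.lt_def, Fin.ext_iff]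
  congr

lemma cv_le_iff (f g : Fin n → ℕ) (i j : Fin n) :
    cv f i j ≤ cv g i j ↔ ((f j ≤ f i → g j ≤ g i) ∧ (f j < f i → g j < g i)) := by
  unfold cv
  split_ifs <;> simp <;> omega

lemma neg_one_le_cv (f : Fin n → ℕ) (i j : Fin n) : -1 ≤ cv f i j := by
  unfold cv
  split_ifs <;> simp

lemma opLE_iff (lam mu : OrderedPartition n) :
    opLE lam mu ↔ ∀ i j, i < j → cv (pos lam) i j ≤ cv (pos mu) i j := by
  simp only [opLE, opCoinv_eq]

/-- The elements strictly between `i` and `j` in value that are positioned strictly after `i`. -/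
def later (f : Fin n → ℕ) (i j : Fin n) : Finset (Fin n) :=
  Finset.univ.filter fun b => i < b ∧ b < j ∧ f i < f b

lemma mem_later {f : Fin n → ℕ} {i j b : Fin n} :
    b ∈ later f i j ↔ i < b ∧ b < j ∧ f i < f b := by
  simp [later]

/-- The coinversion of `(i, j)`, replaced by `-1` when `later f i j` has at least `k` elements. -/
def trunc (k : ℕ) (f : Fin n → ℕ) (i j : Fin n) : ℤ :=
  if (later f i j).card < k then cv f i j else -1

lemma trunc_le_cv (k : ℕ) (f : Fin n → ℕ) (i j : Fin n) : trunc k f i j ≤ cv f i j := by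
  unfold trunc
  split_ifs
  · exact le_rfl
  · exact neg_one_le_cv f i j

lemma trunc_mono (k : ℕ) {f g : Fin n → ℕ} (h : ∀ i j, i < j → cv f i j ≤ cv g i j)
    (i j : Fin n) (hij : i < j) : trunc k f i j ≤ trunc k g i j := by
  have hsub : later g i j ⊆ later f i j := by
    intro b hb
    rw [mem_later] at hb ⊢
    have := ((cv_le_iff f g i b).1 (h i b hb.1)).1
    refine ⟨hb.1, hb.2.1, ?_⟩
    by_contra hc
    have := this (by omega)
    omega
  have hc := Finset.card_le_card hsub
  have h1 := neg_one_le_cv g i j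
  have h2 := h i j hij
  unfold trunc
  split_ifs <;> omega

/-! ### Invariance under the rewriting rules -/

/-- Two preorders that agree except between a low part `P` and a high part `Q`, in the presence of
`k` witnesses, have the same truncated coinversions. -/
lemma trunc_congr {k : ℕ} (hk : 1 ≤ k) {f g : Fin n → ℕ} {P Q : Fin n → Prop}
    (hfg : ∀ x y, ¬ (P x ∧ Q y) → ¬ (Q x ∧ P y) → (f x < f y ↔ g x < g y))
    {W : Finset (Fin n)} (hW : k ≤ W.card)
    (hP : ∀ b ∈ W, ∀ x, P x → x < b ∧ f x < f b) (hQ : ∀ b ∈ W, ∀ y, Q y → b < y)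
    (i j : Fin n) (hij : i < j) : trunc k f i j = trunc k g i j := by
  obtain ⟨w, hw⟩ : W.Nonempty := Finset.card_pos.1 (by omega)
  have hPQ : ∀ x y, P x → Q y → x < y := fun x y hx hy => (hP w hw x hx).1.trans (hQ w hw y hy)
  have hbP : ∀ b ∈ W, ¬ P b := fun b hb h => lt_irrefl _ (hP b hb b h).1
  have hbQ : ∀ b ∈ W, ¬ Q b := fun b hb h => lt_irrefl _ (hQ b hb b h)
  by_cases hbig : P i ∧ ∃ c, Q c ∧ c ≤ j
  · -- All witnesses lie in `later f i j` and in `later g i j`.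
    obtain ⟨hi, c, hc, hcj⟩ := hbig
    have hf : W ⊆ later f i j := fun b hb => mem_later.2
      ⟨(hP b hb i hi).1, (hQ b hb c hc).trans_le hcj, (hP b hb i hi).2⟩
    have hg : W ⊆ later g i j := fun b hb => mem_later.2
      ⟨(hP b hb i hi).1, (hQ b hb c hc).trans_le hcj,
        (hfg i b (fun h => hbQ b hb h.2) (fun h => hbP b hb h.2)).1 (hP b hb i hi).2⟩
    have h1 := Finset.card_le_card hf
    have h2 := Finset.card_le_card hg
    unfold trunc
    rw [if_neg (by omega), if_neg (by omega)]
  · have key : ∀ b, i < b → b ≤ j → ((f i < f b ↔ g i < g b) ∧ (f b < f i ↔ g b < g i)) := by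
      intro b hib hbj
      have h1 : ¬ (P i ∧ Q b) := fun h => hbig ⟨h.1, b, h.2, hbj⟩
      have h2 : ¬ (Q i ∧ P b) := fun h => lt_asymm hib (hPQ _ _ h.2 h.1)
      exact ⟨hfg i b h1 h2, hfg b i (fun h => h2 h.symm) (fun h => h1 h.symm)⟩
    have hl : later f i j = later g i j := by
      ext b
      rw [mem_later, mem_later]
      constructor
      · rintro ⟨h1, h2, h3⟩
        exact ⟨h1, h2, (key b h1 h2.le).1.1 h3⟩
      · rintro ⟨h1, h2, h3⟩
        exact ⟨h1, h2, (key b h1 h2.le).1.2 h3⟩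
    have hc : cv f i j = cv g i j := by
      obtain ⟨h1, h2⟩ := key j hij le_rfl
      unfold cv
      split_ifs <;> first | rfl | omega
    unfold trunc
    rw [hl, hc]

lemma trunc_eq_of_witness {k : ℕ} (hk : 1 ≤ k) (lam mu : OrderedPartition n)
    (t t1 : Fin lam.parts) (ht : (t1 : ℕ) = t + 1) (hw : opWitness k lam.idx t t1)
    (h : ∀ x y, ¬ (lam.idx x = t ∧ lam.idx y = t1) → ¬ (lam.idx x = t1 ∧ lam.idx y = t) →
      (pos lam x < pos lam y ↔ pos mu x < pos mu y))
    (i j : Fin n) (hij : i < j) : trunc k (pos lam) i j = trunc k (pos mu) i j := by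
  rcases hw with hw | hw
  · refine trunc_congr hk (P := fun x => lam.idx x = t) (Q := fun x => lam.idx x = t1)
      h hw ?_ ?_ i j hij
    · intro b hb x hx
      simp only [Finset.mem_filter, Finset.mem_univ, true_and] at hb
      refine ⟨hb.2.1 x hx, ?_⟩
      have := hb.1
      simp only [pos, hx, Fin.lt_def] at this ⊢
      omega
    · intro b hb y hy
      simp only [Finset.mem_filter, Finset.mem_univ, true_and] at hb
      exact hb.2.2 y hy
  · refine trunc_congr hk (P := fun x => lam.idx x = t1) (Q := fun x => lam.idx x = t)
      (fun x y h1 h2 => h x y h2 h1) hw ?_ ?_ i j hij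
    · intro b hb x hx
      simp only [Finset.mem_filter, Finset.mem_univ, true_and] at hb
      refine ⟨hb.2.1 x hx, ?_⟩
      have := hb.1
      simp only [pos, hx, Fin.lt_def] at this ⊢
      omega
    · intro b hb y hy
      simp only [Finset.mem_filter, Finset.mem_univ, true_and] at hb
      exact hb.2.2 y hy

lemma swap_lt_swap_iff {p : ℕ} {t t1 : Fin p} (ht : (t1 : ℕ) = t + 1) {u v : Fin p}
    (h1 : ¬ (u = t ∧ v = t1)) (h2 : ¬ (u = t1 ∧ v = t)) :
    Equiv.swap t t1 u < Equiv.swap t t1 v ↔ u < v := by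
  simp only [Equiv.swap_apply_def]
  simp only [Fin.ext_iff] at h1 h2
  split_ifs <;> simp only [Fin.ext_iff, Fin.lt_def] at * <;> omega

lemma trunc_eq_of_cong {k : ℕ} (hk : 1 ≤ k) {lam mu : OrderedPartition n} (h : opCong k lam mu)
    (i j : Fin n) (hij : i < j) : trunc k (pos lam) i j = trunc k (pos mu) i j := by
  induction h with
  | refl => rfl
  | symm _ _ _ ih => exact ih.symm
  | trans _ _ _ _ _ ih1 ih2 => exact ih1.trans ih2
  | rel a b hab =>
    rcases hab with ⟨-, t, t1, ht, hmu, hw⟩ | ⟨-, t, t1, ht, hmu, hw⟩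
    · refine trunc_eq_of_witness hk a b t t1 ht hw (fun x y h1 h2 => ?_) i j hij
      simp only [pos, hmu]
      exact (swap_lt_swap_iff ht h1 h2).symm
    · refine trunc_eq_of_witness hk a b t t1 ht hw (fun x y h1 h2 => ?_) i j hij
      simp only [pos, hmu]
      simp only [Fin.ext_iff] at h1 h2
      split_ifs <;> omega

/-! ### Irreducible ordered partitions -/

/-- No rewriting rule lowers the coinversions of `lam`: neither can a descent `c | a` be undone
(`desc`), nor can a part be cut between the consecutive elements `i < j` into `a | c` (`cut`). -/
structure Irred (k : ℕ) (lam : OrderedPartition n) : Prop where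
  desc : ∀ r : ℕ, r + 1 < lam.parts → ∀ W : Finset (Fin n),
    (∀ b ∈ W, r + 1 < pos lam b) → (∀ b ∈ W, ∀ x, pos lam x = r + 1 → x < b) →
    (∀ b ∈ W, ∀ y, pos lam y = r → b < y) → W.card < k
  cut : ∀ i j : Fin n, i < j → pos lam i = pos lam j →
    (∀ b, i < b → b < j → pos lam b ≠ pos lam i) → (later (pos lam) i j).card < k

/-- If `later i j` is large and no element of value strictly between `i` and `j` is positioned
between `j` and `i`, then no part positioned between them has elements on both sides of the
gap `(i, j)`: it could be cut there. -/
lemma Irred.no_straddle {k : ℕ} {lam : OrderedPartition n} (hl : Irred k lam) {i j : Fin n}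
    (hij : i < j) (hN : k ≤ (later (pos lam) i j).card)
    (hgap : ∀ b, i < b → b < j → pos lam j ≤ pos lam b → pos lam b ≤ pos lam i → False)
    {x y : Fin n} (hx : x ≤ i) (hy : j ≤ y) (hxy : pos lam x = pos lam y)
    (h1 : pos lam j ≤ pos lam x) (h2 : pos lam x ≤ pos lam i) : False := by
  obtain ⟨x', hx', hxmax⟩ := Finset.exists_max_image
    (Finset.univ.filter fun z => z ≤ i ∧ pos lam z = pos lam x) id ⟨x, by simp [hx]⟩
  obtain ⟨y', hy', hymin⟩ := Finset.exists_min_image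
    (Finset.univ.filter fun z => j ≤ z ∧ pos lam z = pos lam x) id ⟨y, by simp [hy, hxy]⟩
  simp only [Finset.mem_filter, Finset.mem_univ, true_and, id] at hx' hy' hxmax hymin
  have hlt : x' < y' := (hx'.1.trans_lt hij).trans_le hy'.1
  have hc := hl.cut x' y' hlt (hx'.2.trans hy'.2.symm) (by
    intro b hb1 hb2 hb
    rw [hx'.2] at hb
    rcases le_or_gt b i with h | h
    · exact absurd (hxmax b ⟨h, hb⟩) (not_le.2 hb1)
    rcases le_or_gt j b with h' | h'
    · exact absurd (hymin b ⟨h', hb⟩) (not_le.2 hb2)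
    exact hgap b h h' (by omega) (by omega))
  have hsub : later (pos lam) i j ⊆ later (pos lam) x' y' := by
    intro b hb
    rw [mem_later] at hb ⊢
    exact ⟨hx'.1.trans_lt hb.1, hb.2.1.trans_le hy'.1, by omega⟩
  have := Finset.card_le_card hsub
  omega

/-- A truncated pair `i < j` with `j` weakly before `i` can be refined by an element lying between
`i` and `j` both in value and in position. -/
lemma Irred.exists_between {k : ℕ} {lam : OrderedPartition n} (hl : Irred k lam) {i j : Fin n}
    (hij : i < j) (hN : k ≤ (later (pos lam) i j).card) (hji : pos lam j ≤ pos lam i) :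
    ∃ b, i < b ∧ b < j ∧ pos lam j ≤ pos lam b ∧ pos lam b ≤ pos lam i := by
  by_contra hcon
  have hgap : ∀ b, i < b → b < j → pos lam j ≤ pos lam b → pos lam b ≤ pos lam i → False :=
    fun b h1 h2 h3 h4 => hcon ⟨b, h1, h2, h3, h4⟩
  -- Every part from that of `j` to that of `i` lies above or below the gap. The first one below
  -- the gap forms a descent with its predecessor.
  have hex : ∃ r, pos lam j ≤ r ∧ ∃ x ≤ i, pos lam x = r := ⟨pos lam i, hji, i, le_rfl, rfl⟩
  classical
  obtain ⟨hjr, x, hxi, hxr⟩ := Nat.find_spec hex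
  have hmin := fun m => Nat.find_min (m := m) hex
  have hri : Nat.find hex ≤ pos lam i := Nat.find_le ⟨hji, i, le_rfl, rfl⟩
  generalize Nat.find hex = r at *
  have hne : pos lam j ≠ r := by
    rintro h
    exact hl.no_straddle hij hN hgap hxi le_rfl (by omega) (by omega) (by omega)
  obtain ⟨s, rfl⟩ : ∃ s, r = s + 1 := ⟨r - 1, by omega⟩
  have hs : s + 1 < lam.parts := hxr ▸ (lam.idx x).2
  refine absurd (hl.desc s hs (later (pos lam) i j) ?_ ?_ ?_) (not_lt.2 hN)
  · intro b hb
    rw [mem_later] at hb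
    omega
  · intro b hb z hz
    rw [mem_later] at hb
    refine lt_of_le_of_lt ?_ hb.1
    by_contra hzi
    rcases le_or_gt j z with h | h
    · exact hl.no_straddle hij hN hgap hxi h (by omega) (by omega) (by omega)
    · exact hgap z (not_le.1 hzi) h (by omega) (by omega)
  · intro b hb z hz
    rw [mem_later] at hb
    refine lt_of_lt_of_le hb.2.1 ?_
    by_contra hzj
    rcases le_or_gt z i with h | h
    · exact hmin s (by omega) ⟨by omega, z, h, hz⟩
    · exact hgap z h (not_le.1 hzj) (by omega) (by omega)

lemma Irred.le_of_trunc_le {k : ℕ} {lam mu : OrderedPartition n} (hl : Irred k lam)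
    (h : ∀ i j, i < j → trunc k (pos lam) i j ≤ trunc k (pos mu) i j) : opLE lam mu := by
  rw [opLE_iff]
  suffices H : ∀ d : ℕ, ∀ i j : Fin n, i < j → (j : ℕ) - i = d →
      cv (pos lam) i j ≤ cv (pos mu) i j from fun i j hij => H _ i j hij rfl
  intro d
  induction d using Nat.strong_induction_on with
  | _ d ih =>
    intro i j hij hd
    by_cases hN : (later (pos lam) i j).card < k
    · have h1 := h i j hij
      rw [trunc, if_pos hN] at h1
      exact h1.trans (trunc_le_cv k _ i j)
    rcases lt_or_ge (pos lam i) (pos lam j) with hlt | hji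
    · rw [cv, if_pos hlt]
      exact neg_one_le_cv _ i j
    obtain ⟨b, h1, h2, h3, h4⟩ := hl.exists_between hij (not_lt.1 hN) hji
    have h1' := Fin.lt_def.1 h1
    have h2' := Fin.lt_def.1 h2
    have e1 := (cv_le_iff _ _ _ _).1 (ih (b - i) (by omega) i b h1 rfl)
    have e2 := (cv_le_iff _ _ _ _).1 (ih (j - b) (by omega) b j h2 rfl)
    rw [cv_le_iff]
    omega

/-! ### Existence of irreducible representatives -/

/-- Total coinversion, shifted to take natural values. -/
def weight (lam : OrderedPartition n) : ℕ :=
  ∑ q : Fin n × Fin n, if q.1 < q.2 then (cv (pos lam) q.1 q.2 + 1).toNat else 0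

lemma weight_lt {lam mu : OrderedPartition n} (h : opLE lam mu) {i j : Fin n} (hij : i < j)
    (hlt : cv (pos lam) i j < cv (pos mu) i j) : weight lam < weight mu := by
  rw [opLE_iff] at h
  refine Finset.sum_lt_sum (fun q _ => ?_) ⟨(i, j), Finset.mem_univ _, ?_⟩
  · split_ifs with hq
    · have := h q.1 q.2 hq
      omega
    · exact le_rfl
  · have := neg_one_le_cv (pos lam) i j
    simp only [hij, if_true]
    omega

/-- A descent `c | a` with `k` witnesses can be swapped to `a | c`, lowering the weight. -/
lemma exists_lower_of_desc {k : ℕ} (hk : 1 ≤ k) (lam : OrderedPartition n) (r : ℕ)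
    (hr : r + 1 < lam.parts) (W : Finset (Fin n)) (h1 : ∀ b ∈ W, r + 1 < pos lam b)
    (h2 : ∀ b ∈ W, ∀ x, pos lam x = r + 1 → x < b) (h3 : ∀ b ∈ W, ∀ y, pos lam y = r → b < y)
    (hW : k ≤ W.card) : ∃ mu, opCong k mu lam ∧ weight mu < weight lam := by
  obtain ⟨w, hw⟩ : W.Nonempty := Finset.card_pos.1 (by omega)
  let t : Fin lam.parts := ⟨r, by omega⟩
  let t1 : Fin lam.parts := ⟨r + 1, hr⟩
  have ht : (t1 : ℕ) = t + 1 := rfl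
  let mu : OrderedPartition n := ⟨lam.parts, fun x => Equiv.swap t t1 (lam.idx x),
    (Equiv.swap t t1).surjective.comp lam.surj⟩
  have hpt : ∀ x, lam.idx x = t ↔ pos lam x = r := fun x => by simp [pos, t, Fin.ext_iff]
  have hpt1 : ∀ x, lam.idx x = t1 ↔ pos lam x = r + 1 := fun x => by simp [pos, t1, Fin.ext_iff]
  have hle : opLE mu lam := by
    rw [opLE_iff]
    intro i j hij
    by_cases hA : lam.idx i = t1 ∧ lam.idx j = t
    · have : pos mu i < pos mu j := by
        simp only [pos, mu, hA.1, hA.2, Equiv.swap_apply_left, Equiv.swap_apply_right]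
        omega
      rw [cv, if_pos this]
      exact neg_one_le_cv _ i j
    · have hB : ¬ (lam.idx i = t ∧ lam.idx j = t1) := by
        rintro ⟨hi, hj⟩
        exact lt_asymm hij ((h2 w hw j ((hpt1 j).1 hj)).trans (h3 w hw i ((hpt i).1 hi)))
      have e1 : pos mu i < pos mu j ↔ pos lam i < pos lam j := swap_lt_swap_iff ht hB hA
      have e2 : pos mu j < pos mu i ↔ pos lam j < pos lam i :=
        swap_lt_swap_iff ht (fun h => hA h.symm) (fun h => hB h.symm)
      rw [cv_le_iff]
      omega
  obtain ⟨x, hx⟩ := lam.surj t1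
  obtain ⟨y, hy⟩ := lam.surj t
  have hxy : x < y := (h2 w hw x ((hpt1 x).1 hx)).trans (h3 w hw y ((hpt y).1 hy))
  refine ⟨mu, ?_, weight_lt hle hxy ?_⟩
  · refine Relation.EqvGen.symm _ _ (Relation.EqvGen.rel _ _ (Or.inl ⟨rfl, t, t1, ht,
      fun x => rfl, Or.inr (hW.trans (Finset.card_le_card fun b hb => ?_))⟩))
    simp only [Finset.mem_filter, Finset.mem_univ, true_and]
    exact ⟨h1 b hb, fun x hx => h2 b hb x ((hpt1 x).1 hx), fun y hy => h3 b hb y ((hpt y).1 hy)⟩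
  · have e : pos mu x < pos mu y := by
      simp only [pos, mu, hx, hy, Equiv.swap_apply_left, Equiv.swap_apply_right]
      omega
    have e' : ¬ pos lam x < pos lam y := by
      rw [(hpt1 x).1 hx, (hpt y).1 hy]
      omega
    simp only [cv, e, e', if_true, if_false]
    split_ifs <;> simp

/-- A part with a cut between the consecutive elements `i < j` that has `k` witnesses can be split
there into `a | c`, lowering the weight. -/
lemma exists_lower_of_cut {k : ℕ} (lam : OrderedPartition n) (i j : Fin n) (hij : i < j)
    (hpos : pos lam i = pos lam j) (hgap : ∀ b, i < b → b < j → pos lam b ≠ pos lam i)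
    (hN : k ≤ (later (pos lam) i j).card) : ∃ mu, opCong k mu lam ∧ weight mu < weight lam := by
  have hlt : ∀ x, pos lam x < lam.parts := fun x => (lam.idx x).2
  let F : Fin n → ℕ := fun x =>
    if pos lam x < pos lam i ∨ (pos lam x = pos lam i ∧ x ≤ i) then pos lam x else pos lam x + 1
  have hF : ∀ x, F x < lam.parts + 1 := by
    intro x
    have := hlt x
    simp only [F]
    split_ifs <;> omega
  have hFi : F i = pos lam i := by simp [F]
  have hFj : F j = pos lam i + 1 := by simp [F, hpos, hij]
  have hsurj : Function.Surjective fun x => (⟨F x, hF x⟩ : Fin (lam.parts + 1)) := by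
    rintro ⟨m, hm⟩
    simp only [Fin.mk.injEq]
    have hli := hlt i
    rcases lt_trichotomy m (pos lam i) with h | h | h
    · obtain ⟨x, hx⟩ := lam.surj ⟨m, by omega⟩
      have hx' : pos lam x = m := by simp [pos, hx]
      exact ⟨x, by simp [F, hx', h]⟩
    · exact ⟨i, by omega⟩
    · rcases Nat.eq_or_lt_of_le (Nat.succ_le_of_lt h) with h' | h'
      · exact ⟨j, by omega⟩
      · obtain ⟨x, hx⟩ := lam.surj ⟨m - 1, by omega⟩
        have hx' : pos lam x = m - 1 := by simp [pos, hx]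
        refine ⟨x, ?_⟩
        simp only [F, hx']
        rw [if_neg (by omega)]
        omega
  let mu : OrderedPartition n := ⟨lam.parts + 1, fun x => ⟨F x, hF x⟩, hsurj⟩
  have hmu : ∀ x, pos mu x = F x := fun x => rfl
  have hle : opLE mu lam := by
    rw [opLE_iff]
    intro x y hxy
    rw [cv_le_iff, hmu, hmu]
    have hxy' : ¬ (x ≤ i) → ¬ (y ≤ i) := fun h h' => h (hxy.le.trans h')
    simp only [F]
    split_ifs <;> omega
  refine ⟨mu, ?_, weight_lt hle hij ?_⟩
  · let t : Fin mu.parts := ⟨pos lam i, (hlt i).trans (Nat.lt_succ_self _)⟩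
    let t1 : Fin mu.parts := ⟨pos lam i + 1, Nat.succ_lt_succ (hlt i)⟩
    refine Relation.EqvGen.rel _ _ (Or.inr ⟨rfl, t, t1, rfl, fun x => ?_,
      Or.inl (hN.trans (Finset.card_le_card fun b hb => ?_))⟩)
    · change pos lam x = if F x ≤ pos lam i then F x else F x - 1
      simp only [F]
      split_ifs <;> omega
    · rw [mem_later] at hb
      obtain ⟨hb1, hb2, hb3⟩ := hb
      simp only [Finset.mem_filter, Finset.mem_univ, true_and, mu, t, t1, Fin.lt_def, Fin.ext_iff]
      refine ⟨?_, fun x hx => ?_, fun y hy => ?_⟩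
      · simp only [F]
        rw [if_neg (by omega)]
        omega
      · have : x ≤ i := by
          by_contra hc
          simp only [F] at hx
          split_ifs at hx <;> omega
        exact this.trans_lt hb1
      · have hyi : ¬ y ≤ i ∧ pos lam y = pos lam i := by
          simp only [F] at hy
          split_ifs at hy with hc
          · omega
          · exact ⟨fun h => hc (Or.inr ⟨by omega, h⟩), by omega⟩
        have : j ≤ y := by
          by_contra hc
          exact hgap y (not_le.1 hyi.1) (not_le.1 hc) hyi.2
        exact hb2.trans_le this
  · have e : pos mu i < pos mu j := by
      rw [hmu, hmu]
      omega
    simp [cv, e, hpos]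

lemma exists_irred {k : ℕ} (hk : 1 ≤ k) (lam : OrderedPartition n) :
    ∃ mu, opCong k mu lam ∧ Irred k mu := by
  obtain ⟨mu, hmu, hmin⟩ := (measure (weight (n := n))).wf.has_min {mu | opCong k mu lam}
    ⟨lam, Relation.EqvGen.refl _⟩
  have hno : ¬ ∃ nu, opCong k nu mu ∧ weight nu < weight mu := by
    rintro ⟨nu, h1, h2⟩
    exact hmin nu (Relation.EqvGen.trans _ _ _ h1 hmu) h2
  refine ⟨mu, hmu, ⟨fun r hr W h1 h2 h3 => ?_, fun i j hij hp hg => ?_⟩⟩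
  · by_contra hc
    exact hno (exists_lower_of_desc hk mu r hr W h1 h2 h3 (not_lt.1 hc))
  · by_contra hc
    exact hno (exists_lower_of_cut mu i j hij hp hg (not_lt.1 hc))

/-! ### Antisymmetry of the weak order -/

lemma pos_le_of_lt_imp {lam mu : OrderedPartition n}
    (h : ∀ x y, pos lam x < pos lam y → pos mu x < pos mu y) (x : Fin n) :
    pos lam x ≤ pos mu x := by
  suffices H : ∀ m, ∀ x, pos lam x = m → m ≤ pos mu x from H _ x rfl
  intro m
  induction m with
  | zero => exact fun _ _ => Nat.zero_le _
  | succ m ih =>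
    intro x hx
    have hm : m < lam.parts := by
      have : pos lam x < lam.parts := (lam.idx x).2
      omega
    obtain ⟨y, hy⟩ := lam.surj ⟨m, hm⟩
    have hy' : pos lam y = m := by simp [pos, hy]
    have h1 := ih y hy'
    have h2 := h y x (by omega)
    omega

lemma parts_le_of_pos_le {lam mu : OrderedPartition n} (h : ∀ x, pos lam x ≤ pos mu x) :
    lam.parts ≤ mu.parts := by
  by_contra hc
  obtain ⟨x, hx⟩ := lam.surj ⟨mu.parts, by omega⟩
  have h1 : pos lam x = mu.parts := by simp [pos, hx]
  have h2 : pos mu x < mu.parts := (mu.idx x).2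
  have := h x
  omega

lemma opLE_antisymm {lam mu : OrderedPartition n} (h1 : opLE lam mu) (h2 : opLE mu lam) :
    lam = mu := by
  rw [opLE_iff] at h1 h2
  have key : ∀ x y, pos lam x < pos lam y ↔ pos mu x < pos mu y := by
    intro x y
    rcases lt_trichotomy x y with h | h | h
    · have e1 := (cv_le_iff _ _ _ _).1 (h1 x y h)
      have e2 := (cv_le_iff _ _ _ _).1 (h2 x y h)
      omega
    · subst h
      simp
    · have e1 := (cv_le_iff _ _ _ _).1 (h1 y x h)
      have e2 := (cv_le_iff _ _ _ _).1 (h2 y x h)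
      omega
  have hle := pos_le_of_lt_imp fun x y => (key x y).1
  have hge := pos_le_of_lt_imp fun x y => (key x y).2
  have hparts := le_antisymm (parts_le_of_pos_le hle) (parts_le_of_pos_le hge)
  obtain ⟨p, f, hf⟩ := lam
  obtain ⟨q, g, hg⟩ := mu
  obtain rfl : p = q := hparts
  obtain rfl : f = g := funext fun x => Fin.ext (le_antisymm (hle x) (hge x))
  rfl

/-! ### Reversal of values -/

/-- The ordered partition obtained by the substitution `x ↦ n + 1 - x` on elements, keeping the
order of the parts. -/
def rev (lam : OrderedPartition n) : OrderedPartition n :=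
  ⟨lam.parts, fun x => lam.idx x.rev, lam.surj.comp Fin.rev_surjective⟩

lemma rev_rev (lam : OrderedPartition n) : rev (rev lam) = lam := by
  simp [rev]

lemma opLE_rev {lam mu : OrderedPartition n} (h : opLE lam mu) : opLE (rev mu) (rev lam) := by
  rw [opLE_iff] at h ⊢
  intro i j hij
  have := (cv_le_iff _ _ _ _).1 (h j.rev i.rev (Fin.rev_lt_rev.2 hij))
  rw [cv_le_iff]
  simp only [rev, pos] at this ⊢
  omega

lemma card_le_card_rev (p q : Fin n → Prop) [DecidablePred p] [DecidablePred q]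
    (h : ∀ b, p b → q b.rev) :
    (Finset.univ.filter p).card ≤ (Finset.univ.filter q).card := by
  refine Finset.card_le_card_of_injOn Fin.rev (fun b hb => ?_) (Fin.rev_injective.injOn)
  simp only [Finset.coe_filter, Finset.mem_univ, true_and, Set.mem_ofPred_eq] at hb ⊢
  exact h b hb

/-- Reversal exchanges the two roles `{a, c}` of the parts in the witness condition. -/
lemma opWitness_rev {k p : ℕ} {f : Fin n → Fin p} {t t1 : Fin p} (h : opWitness k f t t1) :
    opWitness k (fun x => f x.rev) t t1 := by
  rcases h with h | h
  · refine Or.inr (h.trans (card_le_card_rev _ _ ?_))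
    rintro b ⟨h1, h2, h3⟩
    refine ⟨by simpa using h1, fun x hx => ?_, fun y hy => ?_⟩
    · exact Fin.lt_rev_iff.2 (h3 _ hx)
    · exact Fin.rev_lt_iff.2 (h2 _ hy)
  · refine Or.inl (h.trans (card_le_card_rev _ _ ?_))
    rintro b ⟨h1, h2, h3⟩
    refine ⟨by simpa using h1, fun x hx => ?_, fun y hy => ?_⟩
    · exact Fin.lt_rev_iff.2 (h3 _ hx)
    · exact Fin.rev_lt_iff.2 (h2 _ hy)

lemma opCong_rev {k : ℕ} {lam mu : OrderedPartition n} (h : opCong k lam mu) :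
    opCong k (rev lam) (rev mu) := by
  induction h with
  | refl => exact Relation.EqvGen.refl _
  | symm _ _ _ ih => exact Relation.EqvGen.symm _ _ ih
  | trans _ _ _ _ _ ih1 ih2 => exact Relation.EqvGen.trans _ _ _ ih1 ih2
  | rel a b hab =>
    refine Relation.EqvGen.rel _ _ ?_
    rcases hab with ⟨hp, t, t1, ht, hmu, hw⟩ | ⟨hp, t, t1, ht, hmu, hw⟩
    · exact Or.inl ⟨hp, t, t1, ht, fun x => hmu x.rev, opWitness_rev hw⟩
    · exact Or.inr ⟨hp, t, t1, ht, fun x => hmu x.rev, opWitness_rev hw⟩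

/-- The minima of the classes, with the down projection order preserving. -/
lemma exists_min {k : ℕ} (hk : 1 ≤ k) (n : ℕ) :
    ∃ mn : OrderedPartition n → OrderedPartition n,
      (∀ lam, opCong k (mn lam) lam) ∧ (∀ lam mu, opCong k mu lam → opLE (mn lam) mu) ∧
      (∀ lam mu, opLE lam mu → opLE (mn lam) (mn mu)) := by
  choose mn hcong hirr using fun lam : OrderedPartition n => exists_irred hk lam
  refine ⟨mn, hcong, fun lam mu h => ?_, fun lam mu h => ?_⟩
  · refine (hirr lam).le_of_trunc_le fun i j hij => ?_
    rw [trunc_eq_of_cong hk (hcong lam) i j hij, trunc_eq_of_cong hk h i j hij]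
  · refine (hirr lam).le_of_trunc_le fun i j hij => ?_
    rw [trunc_eq_of_cong hk (hcong lam) i j hij, trunc_eq_of_cong hk (hcong mu) i j hij]
    exact trunc_mono k ((opLE_iff _ _).1 h) i j hij

end Hypertwist

/-- For `k ≥ 1` and `n ≥ 1`, the `k`-hypertwist congruence is a lattice
congruence of the weak order on ordered partitions of `[n]`: every class is a weak order
interval (with minimum `mn lam` and maximum `mx lam`), and the down/up projections are
order preserving. -/
theorem hypertwist_congruence_is_lattice_congruence (k n : ℕ) (hk : 1 ≤ k) (hn : 1 ≤ n) :
    ∃ mn mx : OrderedPartition n → OrderedPartition n,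
      (∀ lam, opCong k (mn lam) lam ∧ opCong k (mx lam) lam ∧
        (∀ mu, opCong k mu lam ↔ (opLE (mn lam) mu ∧ opLE mu (mx lam)))) ∧
      (∀ lam mu, opLE lam mu → opLE (mn lam) (mn mu) ∧ opLE (mx lam) (mx mu)) := by
  obtain ⟨mn, hcong, hle, hmono⟩ := Hypertwist.exists_min hk n
  have hmx : ∀ lam, opCong k (Hypertwist.rev (mn (Hypertwist.rev lam))) lam := fun lam => by
    simpa only [Hypertwist.rev_rev] using Hypertwist.opCong_rev (hcong (Hypertwist.rev lam))
  have heq : ∀ lam mu, opCong k mu lam → opLE (mn mu) (mn lam) := fun lam mu h =>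
    hle mu (mn lam)
      (Relation.EqvGen.trans _ _ _ (hcong lam) (Relation.EqvGen.symm _ _ h))
  refine ⟨mn, fun lam => Hypertwist.rev (mn (Hypertwist.rev lam)),
    fun lam => ⟨hcong lam, hmx lam, fun mu => ⟨fun h => ⟨hle lam mu h, ?_⟩, ?_⟩⟩,
    fun lam mu h => ⟨hmono lam mu h, ?_⟩⟩
  · simpa only [Hypertwist.rev_rev] using
      Hypertwist.opLE_rev (hle _ _ (Hypertwist.opCong_rev h))
  · rintro ⟨h1, h2⟩
    -- `mn lam = mn (mn lam) ≤ mn mu ≤ mn (mx lam) = mn lam`, hence `mu ≡ mn mu = mn lam ≡ lam`.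
    have e : mn mu = mn lam := by
      refine Hypertwist.opLE_antisymm ?_ ?_
      · have a := hmono _ _ h2
        rwa [Hypertwist.opLE_antisymm (heq _ _ (hmx lam))
          (heq _ _ (Relation.EqvGen.symm _ _ (hmx lam)))] at a
      · have a := hmono _ _ h1
        rwa [Hypertwist.opLE_antisymm (heq _ _ (hcong lam))
          (heq _ _ (Relation.EqvGen.symm _ _ (hcong lam)))] at a
    exact Relation.EqvGen.trans _ _ _ (Relation.EqvGen.symm _ _ (hcong mu)) (e ▸ hcong lam)
  · exact Hypertwist.opLE_rev (hmono _ _ (Hypertwist.opLE_rev h))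
end
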